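/- In the setting of the model f(x) = x_1 x_3 + x_2 x_4 with jointly normal dependent inputs as above, the main effect index of x_1 is S_1 = σ_1^2 (μ_3 + μ_4 ρ_{12} σ_2/σ_1)^2 / D, where ρ_{12} = σ_{12}/(σ_1 σ_2) and D = σ_1^2(σ_3^2+μ_3^2) + σ_2^2(σ_4^2+μ_4^2) + 2σ_{12}(σ_{34}+μ_3μ_4). -/

import Mathlib

open MeasureTheory ProbabilityTheory

/-!
Conditioning on an independent block and then on `X₁` gives
`E[X₁X₃ + X₂X₄ | X₁] = E[X₁ | X₁] E[X₃] + E[X₂ | X₁] E[X₄]`, and the Gaussian regression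
`E[X₂ | X₁] = (σ₁₂ / σ₁²) X₁` turns the right-hand side into a multiple of `X₁`, whose variance is
immediate. The total variance is the sum of the covariances of the products `XᵢYᵢ`, each of which is
determined by the first and second moments of the two independent blocks.
-/

/-- Joint normality of the family `X` with mean vector `m` and covariance matrix `C`, in
Cramér–Wold form. The matrix `C` is not required to be positive semidefinite, and `Real.toNNReal`
replaces a negative value of its quadratic form by `0`. -/
def IsJointlyNormal {Ω ι : Type*} [MeasurableSpace Ω] [Fintype ι] (X : ι → Ω → ℝ) (m : ι → ℝ)
    (C : Matrix ι ι ℝ) (P : Measure Ω) : Prop :=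
  ∀ c : ι → ℝ, HasLaw (fun ω => ∑ i, c i * X i ω)
    (gaussianReal (∑ i, c i * m i) (∑ i, ∑ j, c i * c j * C i j).toNNReal) P

namespace IsJointlyNormal

variable {Ω ι : Type*} [MeasurableSpace Ω] [Fintype ι] {P : Measure Ω} {X : ι → Ω → ℝ}
  {m : ι → ℝ} {C : Matrix ι ι ℝ}

lemma hasLaw_eval (h : IsJointlyNormal X m C P) (i : ι) :
    HasLaw (X i) (gaussianReal (m i) (C i i).toNNReal) P := by
  classical
  simpa [Pi.single_apply] using h (Pi.single i 1)

lemma integral_eval (h : IsJointlyNormal X m C P) (i : ι) : ∫ ω, X i ω ∂P = m i := by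
  rw [(h.hasLaw_eval i).integral_eq, integral_id_gaussianReal]

lemma variance_eval (h : IsJointlyNormal X m C P) {i : ι} (hi : 0 ≤ C i i) :
    Var[X i; P] = C i i := by
  rw [(h.hasLaw_eval i).variance_eq, variance_id_gaussianReal, Real.coe_toNNReal _ hi]

lemma variance_linearCombination (h : IsJointlyNormal X m C P) (c : ι → ℝ) :
    Var[fun ω => ∑ i, c i * X i ω; P] = max (∑ i, ∑ j, c i * c j * C i j) 0 := by
  rw [(h c).variance_eq, variance_id_gaussianReal, Real.coe_toNNReal']

lemma hasGaussianLaw (h : IsJointlyNormal X m C P) : HasGaussianLaw (fun ω i => X i ω) P := by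
  classical
  refine ⟨isGaussian_of_map_eq_gaussianReal fun L => ?_⟩
  have hX : AEMeasurable (fun ω i => X i ω) P :=
    aemeasurable_pi_lambda _ fun i => (h.hasLaw_eval i).aemeasurable
  let c (i : ι) : ℝ := L fun j => if i = j then 1 else 0
  have hL : (L ∘ fun ω i => X i ω) = fun ω => ∑ i, c i * X i ω := by
    ext ω
    simpa [mul_comm, c] using L.toLinearMap.pi_apply_eq_sum_univ fun i => X i ω
  have hmap : (P.map fun ω i => X i ω).map L = P.map fun ω => ∑ i, c i * X i ω := by
    rw [AEMeasurable.map_map_of_aemeasurable (by fun_prop) hX, hL]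
  exact ⟨_, _, hmap.trans (h c).map_eq⟩

lemma memLp_two (h : IsJointlyNormal X m C P) (i : ι) : MemLp (X i) 2 P :=
  (h.hasGaussianLaw.eval i).memLp_two

lemma covariance_eval (h : IsJointlyNormal X m C P) (hsymm : C.IsSymm) (hdiag : ∀ i, 0 ≤ C i i)
    (i j : ι) : cov[X i, X j; P] = C i j := by
  classical
  have := h.hasGaussianLaw.isProbabilityMeasure
  have hadd : Var[fun ω => X i ω + X j ω; P] = max (C i i + 2 * C i j + C j j) 0 := by
    convert h.variance_linearCombination (Pi.single i 1 + Pi.single j 1) using 2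
    · simp [Pi.single_apply, add_mul, Finset.sum_add_distrib]
    · simp only [Pi.add_apply, Pi.single_apply, mul_add, mul_ite, mul_one, mul_zero, add_mul,
        ite_mul, one_mul, zero_mul, Finset.sum_add_distrib, Finset.sum_ite_eq', Finset.mem_univ,
        ↓reduceIte, hsymm.apply i j]
      ring
  have hsub : Var[fun ω => X i ω - X j ω; P] = max (C i i - 2 * C i j + C j j) 0 := by
    convert h.variance_linearCombination (Pi.single i 1 - Pi.single j 1) using 2
    · simp [Pi.single_apply, sub_mul, Finset.sum_sub_distrib]
    · simp only [Pi.sub_apply, Pi.single_apply, mul_sub, mul_ite, mul_one, mul_zero, sub_mul,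
        ite_mul, one_mul, zero_mul, Finset.sum_sub_distrib, Finset.sum_ite_eq', Finset.mem_univ,
        ↓reduceIte, hsymm.apply i j]
      ring
  rw [variance_fun_add (h.memLp_two i) (h.memLp_two j), h.variance_eval (hdiag i),
    h.variance_eval (hdiag j)] at hadd
  rw [variance_fun_sub (h.memLp_two i) (h.memLp_two j), h.variance_eval (hdiag i),
    h.variance_eval (hdiag j)] at hsub
  -- By the parallelogram law the two maxima add up to `2 * (C i i + C j j)`, so neither truncates.
  grind

end IsJointlyNormal

section Gaussian

variable {Ω : Type*} [MeasurableSpace Ω] {P : Measure Ω}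

lemma indepFun_subfamilies_of_covariance_eq_zero {ι κ κ' : Type*} [Finite ι] [Finite κ]
    [Finite κ'] {X : ι → Ω → ℝ} (hX : HasGaussianLaw (fun ω i => X i ω) P) (s : κ → ι) (t : κ' → ι)
    (h : ∀ k l, cov[X (s k), X (t l); P] = 0) :
    IndepFun (fun ω k => X (s k) ω) (fun ω l => X (t l) ω) P := by
  have := Fintype.ofFinite ι
  have := Fintype.ofFinite κ
  have := Fintype.ofFinite κ'
  let restrict : (ι → ℝ) →L[ℝ] (κ → ℝ) × (κ' → ℝ) :=
    (ContinuousLinearMap.pi fun k => .proj (s k)).prod (ContinuousLinearMap.pi fun l => .proj (t l))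
  have hpair : HasGaussianLaw (fun ω => (fun k => X (s k) ω, fun l => X (t l) ω)) P :=
    hX.map_fun restrict
  exact hpair.indepFun_of_covariance_eval h

lemma indepFun_sub_regression {X Y : Ω → ℝ} (hXY : HasGaussianLaw (fun ω => (X ω, Y ω)) P)
    (hX : Var[X; P] ≠ 0) :
    IndepFun X (fun ω => Y ω - cov[X, Y; P] / Var[X; P] * X ω) P := by
  have := hXY.isProbabilityMeasure
  have hXL : MemLp X 2 P := hXY.fst.memLp_two
  have hYL : MemLp Y 2 P := hXY.snd.memLp_two
  set b := cov[X, Y; P] / Var[X; P] with hb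
  have hresidual : HasGaussianLaw (fun ω => (X ω, Y ω - b * X ω)) P :=
    hXY.map_fun ((ContinuousLinearMap.fst ℝ ℝ ℝ).prod
      (ContinuousLinearMap.snd ℝ ℝ ℝ - b • ContinuousLinearMap.fst ℝ ℝ ℝ))
  refine hresidual.indepFun_of_covariance_eq_zero ?_
  rw [covariance_fun_sub_right hXL hYL (hXL.const_mul b), covariance_const_mul_right,
    covariance_self hXL.aemeasurable, hb, div_mul_cancel₀ _ hX, sub_self]

lemma condExp_comap_eq_regression {X Y : Ω → ℝ} (hXm : Measurable X) (hYm : Measurable Y)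
    (hXY : HasGaussianLaw (fun ω => (X ω, Y ω)) P) (hX : Var[X; P] ≠ 0) :
    P[Y | MeasurableSpace.comap X inferInstance] =ᵐ[P] fun ω =>
      ∫ ω, Y ω ∂P + cov[X, Y; P] / Var[X; P] * (X ω - ∫ ω, X ω ∂P) := by
  have := hXY.isProbabilityMeasure
  set b := cov[X, Y; P] / Var[X; P]
  have hXi : Integrable (fun ω => b * X ω) P := hXY.fst.integrable.const_mul b
  have hYi : Integrable Y P := hXY.snd.integrable
  have hRm : Measurable fun ω => Y ω - b * X ω := by fun_prop
  have hresidual : P[fun ω => Y ω - b * X ω | MeasurableSpace.comap X inferInstance]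
      =ᵐ[P] fun _ => ∫ ω, (Y ω - b * X ω) ∂P :=
    condExp_indep_eq hRm.comap_le hXm.comap_le (comap_measurable _).stronglyMeasurable
      (indepFun_sub_regression hXY hX).symm
  have hpredicted : P[fun ω => b * X ω | MeasurableSpace.comap X inferInstance]
      = fun ω => b * X ω :=
    condExp_of_stronglyMeasurable hXm.comap_le
      ((comap_measurable X).const_mul b).stronglyMeasurable hXi
  have hmean : ∫ ω, (Y ω - b * X ω) ∂P = ∫ ω, Y ω ∂P - b * ∫ ω, X ω ∂P := by
    rw [integral_sub hYi hXi, integral_const_mul]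
  filter_upwards [condExp_sub hYi hXi (MeasurableSpace.comap X inferInstance), hresidual]
    with ω hsub hres
  change P[fun ω => Y ω - b * X ω | _] ω = _ at hsub
  rw [hres, Pi.sub_apply, hpredicted, hmean] at hsub
  linear_combination -hsub

end Gaussian

section IndependentProducts

variable {Ω : Type*} [MeasurableSpace Ω] {P : Measure Ω}

lemma memLp_two_mul_of_indepFun {X Y : Ω → ℝ} (h : IndepFun X Y P) (hX : MemLp X 2 P)
    (hY : MemLp Y 2 P) : MemLp (fun ω => X ω * Y ω) 2 P := by
  have hsq : IndepFun (fun ω => X ω ^ 2) (fun ω => Y ω ^ 2) P :=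
    h.comp (measurable_id.pow_const 2) (measurable_id.pow_const 2)
  refine (memLp_two_iff_integrable_sq (hX.1.mul hY.1)).2 ?_
  simp only [Pi.mul_apply, mul_pow]
  exact hsq.integrable_mul hX.integrable_sq hY.integrable_sq

lemma covariance_mul_mul_of_indepFun [IsProbabilityMeasure P] {X X' Y Y' : Ω → ℝ}
    (h : IndepFun (fun ω => (X ω, X' ω)) (fun ω => (Y ω, Y' ω)) P)
    (hX : MemLp X 2 P) (hX' : MemLp X' 2 P) (hY : MemLp Y 2 P) (hY' : MemLp Y' 2 P) :
    cov[fun ω => X ω * Y ω, fun ω => X' ω * Y' ω; P]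
      = (∫ ω, X ω * X' ω ∂P) * (∫ ω, Y ω * Y' ω ∂P)
        - (∫ ω, X ω ∂P) * (∫ ω, Y ω ∂P) * ((∫ ω, X' ω ∂P) * ∫ ω, Y' ω ∂P) := by
  have hXY : IndepFun X Y P := h.comp measurable_fst measurable_fst
  have hXY' : IndepFun X' Y' P := h.comp measurable_snd measurable_snd
  have hmul : IndepFun (fun ω => X ω * X' ω) (fun ω => Y ω * Y' ω) P :=
    h.comp measurable_mul measurable_mul
  rw [covariance_eq_sub (memLp_two_mul_of_indepFun hXY hX hY)
      (memLp_two_mul_of_indepFun hXY' hX' hY'),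
    hXY.integral_fun_mul_eq_mul_integral hX.1 hY.1,
    hXY'.integral_fun_mul_eq_mul_integral hX'.1 hY'.1,
    ← hmul.integral_fun_mul_eq_mul_integral (hX.1.mul hX'.1) (hY.1.mul hY'.1)]
  simp only [Pi.mul_apply, mul_mul_mul_comm]

lemma variance_sum_mul_of_indepFun [IsProbabilityMeasure P] {ι : Type*} [Fintype ι]
    {X Y : ι → Ω → ℝ} (h : IndepFun (fun ω i => X i ω) (fun ω i => Y i ω) P)
    (hX : ∀ i, MemLp (X i) 2 P) (hY : ∀ i, MemLp (Y i) 2 P) (hX0 : ∀ i, ∫ ω, X i ω ∂P = 0) :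
    Var[fun ω => ∑ i, X i ω * Y i ω; P]
      = ∑ i, ∑ j, cov[X i, X j; P]
          * (cov[Y i, Y j; P] + (∫ ω, Y i ω ∂P) * ∫ ω, Y j ω ∂P) := by
  have hpair (i j : ι) : IndepFun (fun ω => (X i ω, X j ω)) (fun ω => (Y i ω, Y j ω)) P :=
    h.comp (φ := fun v => (v i, v j)) (ψ := fun v => (v i, v j)) (by fun_prop) (by fun_prop)
  have hXY (i : ι) : IndepFun (X i) (Y i) P := (hpair i i).comp measurable_fst measurable_fst
  rw [variance_fun_sum fun i => memLp_two_mul_of_indepFun (hXY i) (hX i) (hY i)]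
  refine Finset.sum_congr rfl fun i _ => Finset.sum_congr rfl fun j _ => ?_
  rw [covariance_mul_mul_of_indepFun (hpair i j) (hX i) (hX j) (hY i) (hY j),
    covariance_eq_sub (hX i) (hX j), covariance_eq_sub (hY i) (hY j), hX0 i, hX0 j]
  simp only [Pi.mul_apply]
  ring

end IndependentProducts

section ConditionalExpectation

variable {Ω : Type*} {m m' mΩ : MeasurableSpace Ω} {P : Measure Ω}

lemma condExp_mul_of_indep [IsFiniteMeasure P] {X Y : Ω → ℝ}
    (hm : m ≤ m') (hm' : m' ≤ mΩ) (hXm : StronglyMeasurable[m'] X) (hYm : Measurable Y)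
    (hX : Integrable X P) (hY : Integrable Y P)
    (h : Indep m' (MeasurableSpace.comap Y inferInstance) P) :
    P[fun ω => X ω * Y ω | m] =ᵐ[P] fun ω => P[X | m] ω * ∫ ω, Y ω ∂P := by
  have hXY : IndepFun X Y P := indep_of_indep_of_le_left h hXm.measurable.comap_le
  have hinner : P[fun ω => X ω * Y ω | m'] =ᵐ[P] (∫ ω, Y ω ∂P) • X := by
    filter_upwards [condExp_mul_of_stronglyMeasurable_left hXm (hXY.integrable_mul hX hY) hY,
      condExp_indep_eq hYm.comap_le hm' (comap_measurable Y).stronglyMeasurable h.symm]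
      with ω hpull hconst
    change P[fun ω => X ω * Y ω | m'] ω = _ at hpull
    rw [hpull, Pi.mul_apply, hconst, Pi.smul_apply, smul_eq_mul, mul_comm]
  calc P[fun ω => X ω * Y ω | m]
      =ᵐ[P] P[P[fun ω => X ω * Y ω | m'] | m] := (condExp_condExp_of_le hm hm').symm
    _ =ᵐ[P] P[(∫ ω, Y ω ∂P) • X | m] := condExp_congr_ae hinner
    _ =ᵐ[P] (∫ ω, Y ω ∂P) • P[X | m] := condExp_smul _ _ _
    _ = fun ω => P[X | m] ω * ∫ ω, Y ω ∂P := by ext ω; simp [mul_comm]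

lemma condExp_sum_mul_of_indepFun [IsFiniteMeasure P] {ι : Type*} [Fintype ι] {X Y : ι → Ω → ℝ}
    (hm : m ≤ MeasurableSpace.comap (fun ω i => X i ω) inferInstance)
    (hXm : ∀ i, Measurable (X i)) (hYm : ∀ i, Measurable (Y i))
    (hX : ∀ i, Integrable (X i) P) (hY : ∀ i, Integrable (Y i) P)
    (h : IndepFun (fun ω i => X i ω) (fun ω i => Y i ω) P) :
    P[fun ω => ∑ i, X i ω * Y i ω | m] =ᵐ[P] fun ω => ∑ i, P[X i | m] ω * ∫ ω, Y i ω ∂P := by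
  have hXY (i : ι) : IndepFun (X i) (Y i) P :=
    h.comp (measurable_pi_apply i) (measurable_pi_apply i)
  have hXσ (i : ι) : StronglyMeasurable[MeasurableSpace.comap (fun ω i => X i ω) inferInstance]
      (X i) :=
    ((measurable_pi_apply i).comp (comap_measurable fun ω i => X i ω)).stronglyMeasurable
  have hterm (i : ι) :
      P[fun ω => X i ω * Y i ω | m] =ᵐ[P] fun ω => P[X i | m] ω * ∫ ω, Y i ω ∂P :=
    condExp_mul_of_indep hm (measurable_pi_lambda _ hXm).comap_le (hXσ i) (hYm i) (hX i) (hY i)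
      (h.comp measurable_id (measurable_pi_apply i))
  filter_upwards [condExp_finsetSum (s := Finset.univ)
      (fun i _ => (hXY i).integrable_mul (hX i) (hY i)) m, ae_all_iff.2 hterm] with ω hsum hterms
  rw [Finset.sum_fn, Finset.sum_apply] at hsum
  exact hsum.trans (Finset.sum_congr rfl fun i _ => hterms i)

end ConditionalExpectation

lemma condExp_sum_mul_comap_eval_eq_mul {Ω ι : Type*} [MeasurableSpace Ω] {P : Measure Ω}
    [Fintype ι] {X Y : ι → Ω → ℝ} {k : ι} (hXm : ∀ i, Measurable (X i))
    (hYm : ∀ i, Measurable (Y i)) (hX : ∀ i, HasGaussianLaw (fun ω => (X k ω, X i ω)) P)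
    (hY : ∀ i, Integrable (Y i) P) (h : IndepFun (fun ω i => X i ω) (fun ω i => Y i ω) P)
    (hX0 : ∀ i, ∫ ω, X i ω ∂P = 0) (hk : Var[X k; P] ≠ 0) :
    P[fun ω => ∑ i, X i ω * Y i ω | MeasurableSpace.comap (X k) inferInstance] =ᵐ[P] fun ω =>
      (∑ i, cov[X k, X i; P] * ∫ ω, Y i ω ∂P) / Var[X k; P] * X k ω := by
  have := (hX k).isProbabilityMeasure
  have hle : MeasurableSpace.comap (X k) inferInstance
      ≤ MeasurableSpace.comap (fun ω i => X i ω) inferInstance :=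
    ((measurable_pi_apply k).comp (comap_measurable fun ω i => X i ω)).comap_le
  filter_upwards [condExp_sum_mul_of_indepFun hle hXm hYm (fun i => (hX i).snd.integrable) hY h,
    ae_all_iff.2 fun i => condExp_comap_eq_regression (hXm k) (hXm i) (hX i) hk] with ω hsum hreg
  rw [hsum, Finset.sum_div, Finset.sum_mul]
  refine Finset.sum_congr rfl fun i _ => ?_
  rw [hreg, hX0, hX0]
  ring

namespace IsJointlyNormal

variable {Ω ι κ : Type*} [MeasurableSpace Ω] [Fintype ι] [Fintype κ] {P : Measure Ω}
  {X : ι → Ω → ℝ} {m : ι → ℝ} {C : Matrix ι ι ℝ} {s t : κ → ι}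

lemma variance_sum_mul (h : IsJointlyNormal X m C P) (hsymm : C.IsSymm) (hdiag : ∀ i, 0 ≤ C i i)
    (hst : ∀ k l, C (s k) (t l) = 0) (hs : ∀ k, m (s k) = 0) :
    Var[fun ω => ∑ k, X (s k) ω * X (t k) ω; P]
      = ∑ k, ∑ l, C (s k) (s l) * (C (t k) (t l) + m (t k) * m (t l)) := by
  have := h.hasGaussianLaw.isProbabilityMeasure
  have hcov := h.covariance_eval hsymm hdiag
  have hindep := indepFun_subfamilies_of_covariance_eq_zero h.hasGaussianLaw s t fun k l => by
    rw [hcov, hst]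
  rw [variance_sum_mul_of_indepFun hindep (fun k => h.memLp_two _) (fun k => h.memLp_two _)
    fun k => by rw [h.integral_eval, hs]]
  simp only [hcov, h.integral_eval]

lemma variance_condExp_sum_mul (h : IsJointlyNormal X m C P) (hX : ∀ i, Measurable (X i))
    (hsymm : C.IsSymm) (hdiag : ∀ i, 0 ≤ C i i) (hst : ∀ k l, C (s k) (t l) = 0)
    (hs : ∀ k, m (s k) = 0) {k : κ} (hk : C (s k) (s k) ≠ 0) :
    Var[P[fun ω => ∑ l, X (s l) ω * X (t l) ω | MeasurableSpace.comap (X (s k)) inferInstance]; P]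
      = (∑ l, C (s k) (s l) * m (t l)) ^ 2 / C (s k) (s k) := by
  have hcov := h.covariance_eval hsymm hdiag
  have hvar : Var[X (s k); P] = C (s k) (s k) := h.variance_eval (hdiag _)
  have hindep := indepFun_subfamilies_of_covariance_eq_zero h.hasGaussianLaw s t fun k l => by
    rw [hcov, hst]
  rw [variance_congr (condExp_sum_mul_comap_eval_eq_mul (fun l => hX _) (fun l => hX _)
      (fun l => h.hasGaussianLaw.prodMk _ _) (fun l => (h.hasGaussianLaw.eval _).integrable)
      hindep (fun l => by rw [h.integral_eval, hs]) (hvar.trans_ne hk)),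
    variance_const_mul, hvar]
  simp only [hcov, h.integral_eval]
  field_simp

end IsJointlyNormal

/-- For `f(x) = x₁x₃ + x₂x₄` with `(x₁,x₂,x₃,x₄)` jointly normal of mean `(0,0,μ₃,μ₄)`
and block-diagonal covariance with blocks `[[σ₁²,σ₁₂],[σ₁₂,σ₂²]]` and
`[[σ₃²,σ₃₄],[σ₃₄,σ₄²]]`, the main effect index of `x₁` is
`S₁ = σ₁² (μ₃ + μ₄ ρ₁₂ σ₂/σ₁)² / D` with `ρ₁₂ = σ₁₂/(σ₁σ₂)` and
`D = σ₁²(σ₃²+μ₃²) + σ₂²(σ₄²+μ₄²) + 2σ₁₂(σ₃₄+μ₃μ₄) = Var(f)`. -/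
theorem dependent_gaussian_model_S1
    {Ω : Type*} [MeasurableSpace Ω] (P : Measure Ω) [IsProbabilityMeasure P]
    (X : Fin 4 → Ω → ℝ) (hX : ∀ i, Measurable (X i))
    (μ3 μ4 σ1 σ2 σ3 σ4 σ12 σ34 : ℝ) (hσ1 : σ1 ≠ 0) (hσ2 : σ2 ≠ 0)
    (m : Fin 4 → ℝ) (hm : m = ![0, 0, μ3, μ4])
    (C : Matrix (Fin 4) (Fin 4) ℝ)
    (hC : C = !![σ1 ^ 2, σ12, 0, 0; σ12, σ2 ^ 2, 0, 0;
                 0, 0, σ3 ^ 2, σ34; 0, 0, σ34, σ4 ^ 2])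
    (hgauss : ∀ c : Fin 4 → ℝ,
      Measure.map (fun ω => ∑ i, c i * X i ω) P
        = gaussianReal (∑ i, c i * m i) (∑ i, ∑ j, c i * c j * C i j).toNNReal)
    (f : Ω → ℝ) (hf : f = fun ω => X 0 ω * X 2 ω + X 1 ω * X 3 ω) :
    variance f P
        = σ1 ^ 2 * (σ3 ^ 2 + μ3 ^ 2) + σ2 ^ 2 * (σ4 ^ 2 + μ4 ^ 2)
            + 2 * σ12 * (σ34 + μ3 * μ4) ∧
    variance (P[f | MeasurableSpace.comap (X 0) inferInstance]) P / variance f P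
      = σ1 ^ 2 * (μ3 + μ4 * (σ12 / (σ1 * σ2)) * σ2 / σ1) ^ 2
          / (σ1 ^ 2 * (σ3 ^ 2 + μ3 ^ 2) + σ2 ^ 2 * (σ4 ^ 2 + μ4 ^ 2)
              + 2 * σ12 * (σ34 + μ3 * μ4)) := by
  have hnormal : IsJointlyNormal X m C P := fun c => ⟨by fun_prop, hgauss c⟩
  have hsymm : C.IsSymm := by
    ext i j
    fin_cases i <;> fin_cases j <;> simp [hC]
  have hdiag : ∀ i, 0 ≤ C i i := by simp [Fin.forall_fin_succ, hC, sq_nonneg]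
  have hblocks : ∀ k l, C (![0, 1] k) (![2, 3] l) = 0 := by simp [Fin.forall_fin_two, hC]
  have hcentered : ∀ k, m (![0, 1] k) = 0 := by simp [Fin.forall_fin_two, hm]
  have hσ : C 0 0 ≠ 0 := by simp [hC, hσ1]
  have hsum : f = fun ω => ∑ k, X (![0, 1] k) ω * X (![2, 3] k) ω := by simp [hf]
  have htotal : Var[f; P] = σ1 ^ 2 * (σ3 ^ 2 + μ3 ^ 2) + σ2 ^ 2 * (σ4 ^ 2 + μ4 ^ 2)
      + 2 * σ12 * (σ34 + μ3 * μ4) := by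
    rw [hsum, hnormal.variance_sum_mul hsymm hdiag hblocks hcentered]
    simp only [hC, hm, Fin.sum_univ_two, Matrix.of_apply, Matrix.cons_val', Matrix.cons_val_fin_one,
      Matrix.cons_val_zero, Matrix.cons_val_one, Matrix.cons_val]
    ring
  have hmain : Var[P[f | MeasurableSpace.comap (X 0) inferInstance]; P]
      = (σ1 ^ 2 * μ3 + σ12 * μ4) ^ 2 / σ1 ^ 2 := by
    rw [hsum]
    simpa [Fin.sum_univ_two, hC, hm] using
      hnormal.variance_condExp_sum_mul hX hsymm hdiag hblocks hcentered (k := 0) hσ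
  refine ⟨htotal, ?_⟩
  rw [htotal, hmain]
  congr 1
  field_simp
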